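/- arXiv:1611.01425 — 3 statements merged into one kernel-verified Lean document; each statement's English description precedes it below -/
import Mathlib

section
/- Let C and D be abelian monoidal categories and F : C → D a strong monoidal functor admitting an exact right adjoint G. If (P, d) is an admissible pair in C, then (F(P), d') is an admissible pair in D, where d' := ε ∘ F(d) : F(P) → 𝟙_D and ε : F(𝟙_C) ≅ 𝟙_D is the unit isomorphism of the monoidal structure of F. That is: F(P) is a projective object of D, and the sequence F(P) ⊗ F(P) → F(P) → 𝟙_D → 0 is exact, where the first map is (d' ⊗ id) − (id ⊗ d') (composed with the unitors) and the second is d'. -/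
/-!
Since `G` preserves epimorphisms, its left adjoint `F` preserves projectives. The adjunction also
makes `F` additive (because `G` is) and right exact, so `F` carries the cokernel sequence
`P ⊗ P ⟶ P ⟶ 𝟙 ⟶ 0` to an exact sequence `F(P ⊗ P) ⟶ F(P) ⟶ F(𝟙) ⟶ 0`. The tensorator and the
unit isomorphism of `F` identify the latter with the sequence built from `d' = ε ∘ F(d)`; the
commutation of the left square is `muMap_transportedAug`.
-/

open CategoryTheory MonoidalCategory Limits

universe v₁ v₂ u₁ u₂

variable {C : Type u₁} [Category.{v₁} C] [MonoidalCategory C]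
variable {D : Type u₂} [Category.{v₂} D] [MonoidalCategory D]

/-- The map `(d ⊗ id_P) − (id_P ⊗ d) : P ⊗ P ⟶ P` (composed with the unitors). -/
def muMap [Preadditive C] (P : C) (d : P ⟶ 𝟙_ C) : P ⊗ P ⟶ P :=
  (d ▷ P ≫ (λ_ P).hom) - (P ◁ d ≫ (ρ_ P).hom)

/-- A pair `(P, d)` with `d : P ⟶ 𝟙` is admissible if `P` is projective and
`P ⊗ P ⟶ P ⟶ 𝟙 ⟶ 0` is exact. -/
structure AdmissiblePair [Abelian C] (P : C) (d : P ⟶ 𝟙_ C) : Prop where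
  projective : Projective P
  w : muMap P d ≫ d = 0
  exact : (ShortComplex.mk (muMap P d) d w).Exact
  epi : Epi d

/-- The transported map `d' = ε ∘ F(d) : F(P) ⟶ 𝟙_D`, where `ε : F(𝟙_C) ≅ 𝟙_D` is the unit
isomorphism of the strong monoidal structure of `F`. -/
def transportedAug (F : C ⥤ D) [F.Monoidal] {P : C} (d : P ⟶ 𝟙_ C) : F.obj P ⟶ 𝟙_ D :=
  F.map d ≫ Functor.OplaxMonoidal.η F

/-- The tensorator of an additive strong monoidal functor identifies the first map of the sequence
of `(F(P), d')` with the image of the one of `(P, d)`. -/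
lemma muMap_transportedAug [Preadditive C] [Preadditive D] (F : C ⥤ D) [F.Monoidal] [F.Additive]
    (P : C) (d : P ⟶ 𝟙_ C) :
    muMap (F.obj P) (transportedAug F d) =
      Functor.LaxMonoidal.μ F P P ≫ F.map (muMap P d) := by
  simp only [muMap, transportedAug, Functor.map_sub, Functor.map_comp,
    Functor.Monoidal.map_whiskerRight, Functor.Monoidal.map_whiskerLeft,
    Functor.Monoidal.map_leftUnitor, Functor.Monoidal.map_rightUnitor, Preadditive.comp_sub,
    comp_whiskerRight, MonoidalCategory.whiskerLeft_comp, Category.assoc,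
    Functor.Monoidal.μ_δ_assoc]

/-- If `F : C ⥤ D` is strong monoidal between abelian monoidal categories
and admits an exact right adjoint `G`, then `F` takes admissible pairs to admissible pairs:
for an admissible `(P, d)`, the object `F(P)` is projective and the sequence
`F(P) ⊗ F(P) ⟶ F(P) ⟶ 𝟙_D ⟶ 0` built from `d' = ε ∘ F(d)` is exact. -/
theorem admissiblePair_transport [Abelian C] [Abelian D]
    (F : C ⥤ D) [F.Monoidal] (G : D ⥤ C) (adj : F ⊣ G)
    [PreservesFiniteLimits G] [PreservesFiniteColimits G]
    (P : C) (d : P ⟶ 𝟙_ C) (hP : AdmissiblePair P d) :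
    AdmissiblePair (F.obj P) (transportedAug F d) := by
  have : G.Additive := Functor.additive_of_preserves_binary_products G
  have : F.Additive := adj.left_adjoint_additive
  have : PreservesColimitsOfSize.{0, 0} F := adj.leftAdjoint_preservesColimits
  have := hP.epi
  have hw : muMap (F.obj P) (transportedAug F d) ≫ transportedAug F d = 0 := by
    rw [muMap_transportedAug, transportedAug, Category.assoc, ← F.map_comp_assoc, hP.w]
    simp
  refine ⟨adj.map_projective P hP.projective, hw, ?_, ?_⟩
  · have hF := hP.exact.map_of_epi_of_preservesCokernel F inferInstance inferInstance
    have h₁ : Functor.OplaxMonoidal.δ F P P ≫ muMap (F.obj P) (transportedAug F d) =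
        F.map (muMap P d) ≫ 𝟙 (F.obj P) := by
      rw [muMap_transportedAug, Functor.Monoidal.δ_μ_assoc, Category.comp_id]
    have h₂ : 𝟙 (F.obj P) ≫ transportedAug F d = F.map d ≫ Functor.OplaxMonoidal.η F :=
      Category.id_comp _
    let e : (ShortComplex.mk (muMap P d) d hP.w).map F ≅
        ShortComplex.mk (muMap (F.obj P) (transportedAug F d)) (transportedAug F d) hw :=
      ShortComplex.isoMk (Functor.Monoidal.μIso F P P).symm (Iso.refl (F.obj P))
        (Functor.Monoidal.εIso F).symm h₁ h₂
    exact (ShortComplex.exact_iff_of_iso e).1 hF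
  · unfold transportedAug
    infer_instance
end

section
/- In the setting of the previous statement (C, D monoidal, F : C → D strong monoidal, adjunction F ⊣ G with unit η and counit ϵ, A a monoid object in C, F(A) the induced monoid object in D): for an A-bimodule object T in C with actions t_l, t_r, equip F(T) with the F(A)-bimodule structure whose left action is F(A) ⊗ F(T) ≅ F(A ⊗ T) →F(t_l) F(T) and similarly on the right; and for an F(A)-bimodule object S in D equip G(S) with the A-bimodule structure given by the adjunct actions a_l, a_r. Then: (i) the unit η_T : T → G(F(T)) is a morphism of A-bimodule objects; (ii) the counit ϵ_S : F(G(S)) → S is a morphism of F(A)-bimodule objects, where F(G(S)) carries the F(A)-bimodule structure induced (as above) from the A-bimodule G(S). -/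
/-!
All four identities follow by transposing along the adjunction `F ⊣ G`. For the unit, the
transpose of `(A ◁ η_T) ≫ a_l` is `F(A ◁ η_T) ≫ δ ≫ (F(A) ◁ ϵ_{F(T)}) ≫ μ ≫ F(t_l)`; naturality
of `δ`, the triangle identity `F(η_T) ≫ ϵ_{F(T)} = 𝟙` and `δ ≫ μ = 𝟙` reduce it to `F(t_l)`, the
transpose of `t_l ≫ η_T`. For the counit, `F(a_l) ≫ ϵ_S` is by definition of the adjunct
`δ ≫ (F(A) ◁ ϵ_S) ≫ σ_l`, and precomposing with `μ` cancels `δ`. The right actions are symmetric.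
-/

open CategoryTheory MonoidalCategory Functor.LaxMonoidal Functor.OplaxMonoidal

universe v₁ v₂ u₁ u₂

variable {C : Type u₁} [Category.{v₁} C] [MonoidalCategory C]
variable {D : Type u₂} [Category.{v₂} D] [MonoidalCategory D]

/-- The multiplication of the monoid `F(A)` induced by a monoid `(A, μA)` under a strong
monoidal functor `F`. -/
def inducedMul (F : C ⥤ D) [F.Monoidal] {A : C} (μA : A ⊗ A ⟶ A) :
    F.obj A ⊗ F.obj A ⟶ F.obj A :=
  μ F A A ≫ F.map μA

/-- The unit of the monoid `F(A)` induced by a monoid `(A, uA)`. -/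
def inducedUnit (F : C ⥤ D) [F.Monoidal] {A : C} (uA : 𝟙_ C ⟶ A) : 𝟙_ D ⟶ F.obj A :=
  ε F ≫ F.map uA

/-- The left `F(A)`-action `F(A) ⊗ F(T) ≅ F(A ⊗ T) ⟶ F(T)` on `F(T)` induced from a left
`A`-action `t_l : A ⊗ T ⟶ T`. -/
def inducedLeftAction (F : C ⥤ D) [F.Monoidal] {A T : C} (tl : A ⊗ T ⟶ T) :
    F.obj A ⊗ F.obj T ⟶ F.obj T :=
  μ F A T ≫ F.map tl

/-- The right `F(A)`-action on `F(T)` induced from a right `A`-action `t_r : T ⊗ A ⟶ T`. -/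
def inducedRightAction (F : C ⥤ D) [F.Monoidal] {A T : C} (tr : T ⊗ A ⟶ T) :
    F.obj T ⊗ F.obj A ⟶ F.obj T :=
  μ F T A ≫ F.map tr

/-- The adjunct left `A`-action `a_l : A ⊗ G(S) ⟶ G(S)` obtained from a left `F(A)`-action
`σl : F(A) ⊗ S ⟶ S`, namely the adjunct of `F(A ⊗ G(S)) ≅ F(A) ⊗ F(G(S)) ⟶ F(A) ⊗ S ⟶ S`. -/
def adjunctLeftAction (F : C ⥤ D) [F.Monoidal] (G : D ⥤ C) (adj : F ⊣ G)
    {A : C} {S : D} (σl : F.obj A ⊗ S ⟶ S) : A ⊗ G.obj S ⟶ G.obj S :=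
  (adj.homEquiv (A ⊗ G.obj S) S)
    (δ F A (G.obj S) ≫ (F.obj A ◁ adj.counit.app S) ≫ σl)

/-- The adjunct right `A`-action `a_r : G(S) ⊗ A ⟶ G(S)` obtained from a right `F(A)`-action
`σr : S ⊗ F(A) ⟶ S`. -/
def adjunctRightAction (F : C ⥤ D) [F.Monoidal] (G : D ⥤ C) (adj : F ⊣ G)
    {A : C} {S : D} (σr : S ⊗ F.obj A ⟶ S) : G.obj S ⊗ A ⟶ G.obj S :=
  (adj.homEquiv (G.obj S ⊗ A) S)
    (δ F (G.obj S) A ≫ (adj.counit.app S ▷ F.obj A) ≫ σr)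

/-- In the setting of Statement 8 (`F` strong monoidal, `F ⊣ G`, `A` a monoid
object in `C`, `F(A)` the induced monoid in `D`): (i) for an `A`-bimodule object `(T, t_l, t_r)`
in `C`, the unit `η_T : T ⟶ G(F(T))` is a morphism of `A`-bimodule objects, where `F(T)` carries
the induced `F(A)`-bimodule structure and `G(F(T))` the adjunct `A`-bimodule structure; and
(ii) for an `F(A)`-bimodule object `(S, σl, σr)` in `D`, the counit `ϵ_S : F(G(S)) ⟶ S` is a
morphism of `F(A)`-bimodule objects, where `F(G(S))` carries the `F(A)`-bimodule structure
induced from the adjunct `A`-bimodule structure on `G(S)`. -/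
theorem unit_counit_bimodule_morphisms (F : C ⥤ D) [F.Monoidal] (G : D ⥤ C) (adj : F ⊣ G)
    (A : C) (μA : A ⊗ A ⟶ A) (uA : 𝟙_ C ⟶ A)
    (hA_assoc : (μA ▷ A) ≫ μA = (α_ A A A).hom ≫ (A ◁ μA) ≫ μA)
    (hA_unit_l : (uA ▷ A) ≫ μA = (λ_ A).hom)
    (hA_unit_r : (A ◁ uA) ≫ μA = (ρ_ A).hom)
    (T : C) (tl : A ⊗ T ⟶ T) (tr : T ⊗ A ⟶ T)
    (hT_unit_l : (uA ▷ T) ≫ tl = (λ_ T).hom)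
    (hT_unit_r : (T ◁ uA) ≫ tr = (ρ_ T).hom)
    (hT_assoc_l : (μA ▷ T) ≫ tl = (α_ A A T).hom ≫ (A ◁ tl) ≫ tl)
    (hT_assoc_r : (T ◁ μA) ≫ tr = (α_ T A A).inv ≫ (tr ▷ A) ≫ tr)
    (hT_mid : (tl ▷ A) ≫ tr = (α_ A T A).hom ≫ (A ◁ tr) ≫ tl)
    (S : D) (σl : F.obj A ⊗ S ⟶ S) (σr : S ⊗ F.obj A ⟶ S)
    (hS_unit_l : (inducedUnit F uA ▷ S) ≫ σl = (λ_ S).hom)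
    (hS_unit_r : (S ◁ inducedUnit F uA) ≫ σr = (ρ_ S).hom)
    (hS_assoc_l : (inducedMul F μA ▷ S) ≫ σl =
      (α_ (F.obj A) (F.obj A) S).hom ≫ (F.obj A ◁ σl) ≫ σl)
    (hS_assoc_r : (S ◁ inducedMul F μA) ≫ σr =
      (α_ S (F.obj A) (F.obj A)).inv ≫ (σr ▷ F.obj A) ≫ σr)
    (hS_mid : (σl ▷ F.obj A) ≫ σr = (α_ (F.obj A) S (F.obj A)).hom ≫ (F.obj A ◁ σr) ≫ σl) :
    ((A ◁ adj.unit.app T) ≫ adjunctLeftAction F G adj (inducedLeftAction F tl) =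
      tl ≫ adj.unit.app T) ∧
    ((adj.unit.app T ▷ A) ≫ adjunctRightAction F G adj (inducedRightAction F tr) =
      tr ≫ adj.unit.app T) ∧
    (inducedLeftAction F (adjunctLeftAction F G adj σl) ≫ adj.counit.app S =
      (F.obj A ◁ adj.counit.app S) ≫ σl) ∧
    (inducedRightAction F (adjunctRightAction F G adj σr) ≫ adj.counit.app S =
      (adj.counit.app S ▷ F.obj A) ≫ σr) := by
  -- `dsimp` only unfolds the composite and identity functors in the types of unit and counit.
  refine ⟨?_, ?_, ?_, ?_⟩ <;> dsimp only [Functor.id_obj, Functor.comp_obj]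
  · rw [adjunctLeftAction, inducedLeftAction, ← adj.homEquiv_naturality_left,
      ← adj.homEquiv_id, ← adj.homEquiv_naturality_left]
    congr 1
    rw [← δ_natural_right_assoc, ← whiskerLeft_comp_assoc, adj.homEquiv_id,
      adj.left_triangle_components]
    simp
  · rw [adjunctRightAction, inducedRightAction, ← adj.homEquiv_naturality_left,
      ← adj.homEquiv_id, ← adj.homEquiv_naturality_left]
    congr 1
    rw [← δ_natural_left_assoc, ← comp_whiskerRight_assoc, adj.homEquiv_id,
      adj.left_triangle_components]
    simp
  · rw [inducedLeftAction, adjunctLeftAction, Category.assoc, ← adj.homEquiv_counit,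
      Equiv.symm_apply_apply, Functor.Monoidal.μ_δ_assoc]
  · rw [inducedRightAction, adjunctRightAction, Category.assoc, ← adj.homEquiv_counit,
      Equiv.symm_apply_apply, Functor.Monoidal.μ_δ_assoc]
end

section
/- Let k be a field and G a group. Let (M_x)_{x∈G} together with (ρ_g) be a stable G-family. For k-linear G-representations V and W, give V ⊗ W the diagonal G-action. Then for every φ ∈ F(V ⊗ W), the family τφ defined by (τφ)_x(w ⊗ v) := φ_x((x^{−1}·v) ⊗ w) (extended k-bilinearly) again lies in F(W ⊗ V), so it defines a map τ_{V,W} : F(V ⊗ W) → F(W ⊗ V); moreover τ_{W,V} ∘ τ_{V,W} = id_{F(V ⊗ W)}. -/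
/-!
Applying `τ` twice sends `φ_x (v ⊗ w)` to `φ_x (x⁻¹ v ⊗ x⁻¹ w)`. Since `ρ_x = id` on `M_x`, this
equals `ρ_x (φ_x (x⁻¹ (v ⊗ w)))`, which is `φ_x (v ⊗ w)` by equivariance of `φ` at `g = x`.
That `τφ` is again equivariant follows from equivariance of `φ` and
`x⁻¹ g⁻¹ = g⁻¹ (g x g⁻¹)⁻¹`.
-/

open scoped TensorProduct

variable (k : Type*) [Field k] (G : Type*) [Group G]
variable (M : G → Type*) [∀ x, AddCommGroup (M x)] [∀ x, Module k (M x)]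

/-- The space `F(V)` of families `φ = (φ_x : V → M_x)_{x ∈ G}` of `k`-linear maps satisfying
`ρ_g (φ_x (g⁻¹ · v)) = φ_{g x g⁻¹} (v)`, expressed as a membership predicate.  Here `ρ g x y h`
is the structure map `M x → M y` of the family, indexed by a proof `h : g * x * g⁻¹ = y`. -/
def IsEquivariantFamily (ρ : ∀ g x y : G, g * x * g⁻¹ = y → (M x →ₗ[k] M y))
    {V : Type*} [AddCommGroup V] [Module k V] (ρV : Representation k G V)
    (φ : ∀ x : G, V →ₗ[k] M x) : Prop :=
  ∀ (g x : G) (v : V), ρ g x (g * x * g⁻¹) rfl (φ x (ρV g⁻¹ v)) = φ (g * x * g⁻¹) v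

/-- The cyclic flip `τ` : given `φ ∈ F(V ⊗ W)`, the family `τφ` on `W ⊗ V` defined by
`(τφ)_x (w ⊗ v) = φ_x ((x⁻¹ · v) ⊗ w)`. -/
noncomputable def tauFamily {V W : Type*} [AddCommGroup V] [Module k V] [AddCommGroup W] [Module k W]
    (ρV : Representation k G V) (φ : ∀ x : G, V ⊗[k] W →ₗ[k] M x) :
    ∀ x : G, W ⊗[k] V →ₗ[k] M x :=
  fun x => (φ x).comp ((TensorProduct.map (ρV x⁻¹) LinearMap.id).comp
    (TensorProduct.comm k W V).toLinearMap)

/-- Let `(M_x)_{x ∈ G}`, `(ρ_g)` be a stable `G`-family (`ρ_1 = id`,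
`ρ_{gh} = ρ_g ∘ ρ_h`, each `ρ_g` bijective, and `ρ_x = id` on `M_x` for every `x`).  For
`G`-representations `V`, `W` and the diagonal action on the tensor products: for every
`φ ∈ F(V ⊗ W)` the family `τφ`, `(τφ)_x (w ⊗ v) = φ_x((x⁻¹ · v) ⊗ w)`, lies in `F(W ⊗ V)`,
so `τ` defines a map `τ_{V,W} : F(V ⊗ W) → F(W ⊗ V)`; moreover
`τ_{W,V} ∘ τ_{V,W} = id_{F(V ⊗ W)}`. -/
theorem tauFamily_mem_and_involutive
    (ρ : ∀ g x y : G, g * x * g⁻¹ = y → (M x →ₗ[k] M y))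
    (hρ_one : ∀ (x : G) (h : 1 * x * 1⁻¹ = x), ρ 1 x x h = LinearMap.id)
    (hρ_mul : ∀ (g h x y z : G) (hy : h * x * h⁻¹ = y) (hz : g * y * g⁻¹ = z)
      (hz' : (g * h) * x * (g * h)⁻¹ = z), (ρ g y z hz).comp (ρ h x y hy) = ρ (g * h) x z hz')
    (hρ_bij : ∀ (g x y : G) (h : g * x * g⁻¹ = y), Function.Bijective (ρ g x y h))
    (hρ_stab : ∀ (x : G) (h : x * x * x⁻¹ = x), ρ x x x h = LinearMap.id)
    {V W : Type*} [AddCommGroup V] [Module k V] [AddCommGroup W] [Module k W]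
    (ρV : Representation k G V) (ρW : Representation k G W)
    (φ : ∀ x : G, V ⊗[k] W →ₗ[k] M x)
    (hφ : IsEquivariantFamily k G M ρ (ρV.tprod ρW) φ) :
    IsEquivariantFamily k G M ρ (ρW.tprod ρV) (tauFamily k G M ρV φ) ∧
    ∀ x : G, tauFamily k G M ρW (tauFamily k G M ρV φ) x = φ x := by
  -- Equivariance with the target index `y` free, so that no transport along `x * x * x⁻¹ = x`
  -- is needed when stability is applied.
  have equivariant : ∀ (g x y : G) (h : g * x * g⁻¹ = y) (v : V) (w : W),
      ρ g x y h (φ x (ρV g⁻¹ v ⊗ₜ[k] ρW g⁻¹ w)) = φ y (v ⊗ₜ[k] w) := by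
    intro g x y h v w
    subst h
    simpa using hφ g x (v ⊗ₜ[k] w)
  constructor
  · intro g x t
    induction t using TensorProduct.induction_on with
    | zero => simp
    | add a b ha hb => simp only [map_add, ha, hb]
    | tmul w v =>
      -- `x⁻¹ g⁻¹ v = g⁻¹ (g x g⁻¹)⁻¹ v`, which is what the equivariance of `φ` expects.
      have move : ρV x⁻¹ (ρV g⁻¹ v) = ρV g⁻¹ (ρV (g * x * g⁻¹)⁻¹ v) := by
        simp only [← Module.End.mul_apply, ← map_mul]
        congr 2
        group
      have key := equivariant g x _ rfl (ρV (g * x * g⁻¹)⁻¹ v) w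
      rw [← move] at key
      simpa only [tauFamily, Representation.tprod_apply, LinearMap.comp_apply,
        LinearEquiv.coe_coe, TensorProduct.map_tmul, TensorProduct.comm_tmul,
        LinearMap.id_apply] using key
  · intro x
    refine TensorProduct.ext' fun v w => ?_
    have key := equivariant x x x (by group) v w
    rw [hρ_stab] at key
    simpa only [tauFamily, LinearMap.comp_apply, LinearEquiv.coe_coe, TensorProduct.map_tmul,
      TensorProduct.comm_tmul, LinearMap.id_apply] using key
end
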